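/- Let k ≥ 1 be an integer and let p ∈ ℤ[a,b] be monic as a polynomial in b over ℤ[a], irreducible in ℚ[a,b], dividing f_{k,2} but not dividing f_{k,1}·f_{k−1,2} (so p is the polynomial h_{k,2}). Then, viewing p in ℂ[a,b], either p is irreducible in ℂ[a,b], or there exist an irreducible polynomial t ∈ ℂ[a,b] and a nonzero constant c ∈ ℂ such that p = c·t·t^⋄, where t^⋄(a,b) := t(−a,−b), and t and t^⋄ are not associates. (This is the algebraic content of the irreducibility of the curve Σ_{k,2} in the moduli space M₃ = ℂ²/((a,b)∼(−a,−b)): the zero set of p in ℂ² has at most two irreducible components, which are interchanged by (a,b) ↦ (−a,−b).) -/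

import Mathlib

/-!
Write `E_k = 1 + P_{k+1}² + P_{k+1}P_k + P_k² - 3a²` and
`F_k = 1 + (P_{k+1} - P_k)(P_{k+2} + P_{k+1} + P_k)`. Then `f_{k,2} = f_{k,1} E_k` and
`E_{k+1} = E_k F_k`, so a `p` as in the theorem divides `F_{k-1}` and not `E_{k-1}`. The argument
is an analysis along the conic `E_0 = 1 + (b - a)(b + 2a) = 0`, on which `x = b - a` is a
coordinate with values in the nonzero numbers and the marked critical point `a` has the orbit
`a, b, a, b, …`.

* Let `H` be `F_{k-1}` divided by `E_0` if `k` is odd, and `F_{k-1}` if `k` is even. Expanding the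
  iterates along the conic shows that `H` restricts to `m(x² + ε)` there, with `(m, ε)` one of
  `(1, 1)`, `(2, 1)`, `(-1, -2)` (`exists_good`).

* Modulo `3`, `E_k` is a power of the prime `E_0 ≡ 1 + (b - a)²` (`Ek_mod_three`). Hence a product
  of two nonconstant monic factors of `H` would vanish modulo `9` on the conic, which the
  restriction of `H` does not (`Good.eisenstein`). So `H` is irreducible over `ℤ` and `p = H`.

* Over `ℂ`, let `ρ² = -ε`. The restriction of `H` to the conic has simple zeros at `x = ±ρ`, so at
  most one irreducible factor of `H` vanishes at each of these two points (`Good.not_double`).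
  Conversely, every irreducible factor vanishes at one of them: this is the going-up theorem for
  the integral extension `ℚ[a,b] ⊂ K[a,b]`, with `K` the field of algebraic numbers
  (`pt_eq_zero_of_dvd`). So `H` has at most two irreducible factors. If there are two, then
  `(a,b) ↦ (-a,-b)`, which preserves `H` and exchanges the two points, exchanges the two factors
  (`Good.main`).
-/

open Polynomial

/-- We regard `ℤ[a,b]` as `(ℤ[a])[b]`; the variable `a` is `C X` and `b` is `X`.
`P m = f^m(a)` for `f(z) = z³ - 3a²z + 2a³ + b`. -/
noncomputable def P : ℕ → Polynomial (Polynomial ℤ)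
  | 0 => C X
  | m + 1 => (P m) ^ 3 - 3 * (C X) ^ 2 * (P m) + 2 * (C X) ^ 3 + X

/-- `f_{k,n} = f^{k+n}(a) - f^k(a)`. -/
noncomputable def fkn (k n : ℕ) : Polynomial (Polynomial ℤ) := P (k + n) - P k

/-- The substitution `(a,b) ↦ (-a,-b)` on `ℂ[a,b] = (ℂ[a])[b]`. -/
noncomputable def sigmaC (t : Polynomial (Polynomial ℂ)) : Polynomial (Polynomial ℂ) :=
  (t.map (Polynomial.aeval (-X : Polynomial ℂ)).toRingHom).comp (-X)

/-- The image of `p ∈ ℤ[a,b]` in `ℂ[a,b]`. -/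
noncomputable def toC (p : Polynomial (Polynomial ℤ)) : Polynomial (Polynomial ℂ) :=
  p.map (Polynomial.mapRingHom (Int.castRingHom ℂ))

/-! ### Factorization of `f_{k,2}` -/

/-- `E_k = 1 + P_{k+1}² + P_{k+1}P_k + P_k² - 3a²`, the cofactor of `f_{k,1}` in `f_{k,2}`. -/
noncomputable def Ek (k : ℕ) : Polynomial (Polynomial ℤ) :=
  1 + P (k + 1) ^ 2 + P (k + 1) * P k + P k ^ 2 - 3 * (C X) ^ 2

/-- `F_k = 1 + (P_{k+1} - P_k)(P_{k+2} + P_{k+1} + P_k)`, the cofactor of `E_k` in `E_{k+1}`. -/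
noncomputable def Fk (k : ℕ) : Polynomial (Polynomial ℤ) :=
  1 + (P (k + 1) - P k) * (P (k + 2) + P (k + 1) + P k)

lemma P_succ (m : ℕ) : P (m + 1) = (P m) ^ 3 - 3 * (C X) ^ 2 * (P m) + 2 * (C X) ^ 3 + X := rfl

lemma fkn_two (k : ℕ) : fkn k 2 = fkn k 1 * Ek k := by
  simp only [fkn, Ek]
  rw [show k + 2 = (k + 1) + 1 from rfl, P_succ (k + 1), P_succ k]
  ring

lemma Ek_succ (k : ℕ) : Ek (k + 1) = Ek k * Fk k := by
  simp only [Fk, Ek]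
  rw [show k + 1 + 1 = (k + 1) + 1 from rfl, show k + 2 = (k + 1) + 1 from rfl, P_succ (k + 1), P_succ k]
  ring

lemma P_succ_monic (m : ℕ) : (P (m + 1)).Monic ∧ (P (m + 1)).natDegree = 3 ^ m := by
  induction m with
  | zero =>
    have : P (0 + 1) = X := by rw [P_succ]; simp only [P]; ring
    rw [this]; exact ⟨monic_X, natDegree_X⟩
  | succ m ih =>
    obtain ⟨h1, h2⟩ := ih
    set Q := P (m + 1) with hQ
    have h3 : (Q ^ 3).Monic := h1.pow 3
    have h4 : (Q ^ 3).natDegree = 3 ^ (m + 1) := by rw [h1.natDegree_pow, h2]; ring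
    have hpos : 1 ≤ 3 ^ m := Nat.one_le_pow _ _ (by norm_num)
    have h5 : (-(C (3 * X ^ 2) * Q) + C (2 * X ^ 3) + X).natDegree ≤ 3 ^ m := by
      refine natDegree_add_le_of_degree_le (natDegree_add_le_of_degree_le ?_ ?_) ?_
      · rw [natDegree_neg]; exact (natDegree_C_mul_le _ _).trans h2.le
      · rw [natDegree_C]; exact Nat.zero_le _
      · rw [natDegree_X]; exact hpos
    have h6 : P (m + 1 + 1) = Q ^ 3 + (-(C (3 * X ^ 2) * Q) + C (2 * X ^ 3) + X) := by
      rw [P_succ, ← hQ]; simp only [map_mul, map_pow, map_ofNat]; ring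
    have h7 : (-(C (3 * X ^ 2) * Q) + C (2 * X ^ 3) + X).natDegree < (Q ^ 3).natDegree := by
      rw [h4, pow_succ 3 m]; omega
    rw [h6]
    exact ⟨h3.add_of_left (degree_lt_degree h7), by rw [natDegree_add_eq_left_of_natDegree_lt h7, h4]⟩

lemma P_natDegree_lt (k : ℕ) : (P k).natDegree < 3 ^ k := by
  cases k with
  | zero => simp [P]
  | succ m => rw [(P_succ_monic m).2, pow_succ]; have := Nat.one_le_pow m 3 (by norm_num); omega

lemma Ek_monic (k : ℕ) : (Ek k).Monic := by
  obtain ⟨h1, h2⟩ := P_succ_monic k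
  have h3 := P_natDegree_lt k
  have e : Ek k = P (k + 1) ^ 2 + (P (k + 1) * P k + P k ^ 2 + C (1 - 3 * X ^ 2)) := by
    simp only [Ek, map_sub, map_mul, map_pow, map_ofNat, map_one]; ring
  rw [e]
  refine (h1.pow 2).add_of_left (degree_lt_degree ?_)
  rw [h1.natDegree_pow, h2]
  refine lt_of_le_of_lt (natDegree_add_le_of_degree_le (n := 3 ^ k + (P k).natDegree)
    (natDegree_add_le_of_degree_le ?_ ?_) ?_) (by omega)
  · exact natDegree_mul_le.trans (by rw [h2])
  · exact natDegree_pow_le.trans (by omega)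
  · rw [natDegree_C]; exact Nat.zero_le _

lemma Fk_monic (k : ℕ) : (Fk k).Monic :=
  (Ek_monic k).of_mul_monic_left (Ek_succ k ▸ Ek_monic (k + 1))

/-- Modulo `3` the map `f` is the additive polynomial `z³` plus a constant, hence
`P_{k+1} - P_k = (b - a)^{3^k}` and `E_k` is a power of `1 + (b - a)²`. -/
lemma Ek_mod_three (k : ℕ) :
    (Ek k).map (mapRingHom (Int.castRingHom (ZMod 3))) = (1 + (X - C X) ^ 2) ^ 3 ^ k := by
  set φ := mapRingHom (mapRingHom (Int.castRingHom (ZMod 3))) with hφ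
  have h3 : (3 : Polynomial (Polynomial (ZMod 3))) = 0 := by
    have := CharP.cast_eq_zero (Polynomial (Polynomial (ZMod 3))) 3
    exact_mod_cast this
  have hX : φ (C X) = C X := by simp [hφ]
  have hY : φ X = X := by simp [hφ]
  have hs : ∀ m, φ (P (m + 1)) = φ (P m) ^ 3 - C X ^ 3 + X := by
    intro m
    rw [P_succ]
    simp only [map_add, map_sub, map_mul, map_pow, map_ofNat, hX, hY]
    linear_combination (C X ^ 3 - C X ^ 2 * φ (P m)) * h3
  have hd : ∀ m, φ (P (m + 1)) - φ (P m) = (X - C X) ^ 3 ^ m := by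
    intro m
    induction m with
    | zero =>
      rw [hs]
      simp only [P, hX]
      ring
    | succ m ih =>
      rw [pow_succ, pow_mul, ← ih]
      linear_combination hs (m + 1) - hs m + (φ (P (m + 1)) * φ (P m) * (φ (P (m + 1)) - φ (P m))) * h3
  change φ (Ek k) = _
  have h1 : (1 + (X - C X) ^ 2 : Polynomial (Polynomial (ZMod 3))) ^ 3 ^ k =
      1 + ((X - C X) ^ 3 ^ k) ^ 2 := by
    rw [add_pow_char_pow, one_pow, ← pow_mul, ← pow_mul, mul_comm]
  rw [h1, ← hd, Ek]
  simp only [map_add, map_sub, map_mul, map_pow, map_ofNat, map_one, hX]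
  linear_combination (φ (P (k+1)) * φ (P k) - C X ^ 2) * h3

/-! ### Homomorphisms out of `R[a,b]`, and the involution `(a,b) ↦ (-a,-b)` -/

/-- The ring homomorphism `A[a,b] → B` extending `f` with `a ↦ α`, `b ↦ β`. -/
noncomputable def ev {A B : Type*} [CommRing A] [CommRing B] (f : A →+* B) (α β : B) :
    Polynomial (Polynomial A) →+* B :=
  eval₂RingHom (eval₂RingHom f α) β

section ev
variable {A B D : Type*} [CommRing A] [CommRing B] [CommRing D] (f : A →+* B) (α β : B)

@[simp] lemma ev_CX : ev f α β (C X) = α := by simp [ev]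
@[simp] lemma ev_X : ev f α β X = β := by simp [ev]
@[simp] lemma ev_CC (r : A) : ev f α β (C (C r)) = f r := by simp [ev]

lemma hom_ext {g h : Polynomial (Polynomial A) →+* B} (h0 : ∀ r, g (C (C r)) = h (C (C r)))
    (h1 : g (C X) = h (C X)) (h2 : g X = h X) : g = h := by
  refine Polynomial.ringHom_ext' (Polynomial.ringHom_ext' (RingHom.ext h0) h1) h2

lemma hom_ext_int {g h : Polynomial (Polynomial ℤ) →+* B}
    (h1 : g (C X) = h (C X)) (h2 : g X = h X) : g = h :=
  hom_ext (fun r => by simp) h1 h2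

end ev

/-- The involution `(a,b) ↦ (-a,-b)` of `R[a,b]`. -/
noncomputable def sg (R : Type*) [CommRing R] :
    Polynomial (Polynomial R) →+* Polynomial (Polynomial R) :=
  ev ((C : Polynomial R →+* Polynomial (Polynomial R)).comp (C : R →+* Polynomial R)) (-C (X : Polynomial R)) (-X)

lemma sg_P (k : ℕ) : sg ℤ (P k) = - P k := by
  induction k with
  | zero => simp [P, sg]
  | succ k ih =>
    rw [P_succ]
    simp only [map_add, map_sub, map_mul, map_pow, map_ofNat, ih]
    have h1 : sg ℤ (C X) = - C (X : Polynomial ℤ) := by simp [sg]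
    have h2 : sg ℤ X = - (X : Polynomial (Polynomial ℤ)) := by simp [sg]
    rw [h1, h2]; ring

lemma sg_Fk (k : ℕ) : sg ℤ (Fk k) = Fk k := by
  simp only [Fk, map_add, map_sub, map_mul, map_one, sg_P]; ring

lemma sg_Ek (k : ℕ) : sg ℤ (Ek k) = Ek k := by
  have h1 : sg ℤ (C X) = - C (X : Polynomial ℤ) := by simp [sg]
  simp only [Ek, map_add, map_sub, map_mul, map_one, map_pow, map_ofNat, sg_P, h1]; ring

/-! ### Restriction to the conic `E_0 = 0` -/

/-- `Good H m ε`: `H` is a monic divisor of some `E_k` which restricts to `m(x² + ε)` on the conic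
`E_0 = 0`, where `x = b - a`. The three pairs `(m, ε)` allowed by `par` are the ones that occur
for the factors of `f_{k,2}`; in each of them `x² + ε` is `x² + 1` modulo `3`, and `3 ∤ m`. -/
structure Good (H : Polynomial (Polynomial ℤ)) (m ε : ℤ) : Prop where
  par : (m = 1 ∧ ε = 1) ∨ (m = 2 ∧ ε = 1) ∨ (m = -1 ∧ ε = -2)
  monic : H.Monic
  dvd : ∃ k, H ∣ Ek k
  mod : Ek 0 ∣ H - (m : Polynomial (Polynomial ℤ)) * ((X - C X) ^ 2 + (ε : Polynomial (Polynomial ℤ)))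

lemma Ek_zero : Ek 0 = 1 + (X - C X) * (X + 2 * C X) := by
  simp only [Ek, P]; ring

/-- On the conic `E_0 = 0` the marked critical point has the periodic orbit `a, b, a, b, …`.
This is the second-order refinement for the even iterates: `P_{2j} ≡ a + (b - a)E_0` modulo
`E_0²` when `j ≥ 1`. The critical point makes `f(a + E_0 w) ≡ b` modulo `E_0²`, so the expansion
does not depend on `j`. -/
lemma P_even (j : ℕ) : ∃ l : Polynomial (Polynomial ℤ), (j = 0 → l = 0) ∧ (j ≠ 0 → l = 1) ∧
    Ek 0 ^ 2 ∣ P (2 * j) - (C X + l * (X - C X) * Ek 0) := by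
  have key : ∀ Q : Polynomial (Polynomial ℤ), Ek 0 ∣ Q - C X → Ek 0 ^ 2 ∣ (Q ^ 3 - 3 * (C X) ^ 2 * Q + 2 * (C X) ^ 3 + X) - X := by
    rintro Q ⟨w, hw⟩
    obtain rfl : Q = C X + Ek 0 * w := by rw [← hw]; ring
    exact ⟨w ^ 2 * (3 * C X + Ek 0 * w), by ring⟩
  have key2 : ∀ Q : Polynomial (Polynomial ℤ), Ek 0 ^ 2 ∣ Q - X → Ek 0 ^ 2 ∣ (Q ^ 3 - 3 * (C X) ^ 2 * Q + 2 * (C X) ^ 3 + X) - (C X + (X - C X) * Ek 0) := by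
    rintro Q ⟨w, hw⟩
    obtain rfl : Q = X + Ek 0 ^ 2 * w := by rw [← hw]; ring
    refine ⟨w * (3 * X ^ 2 + 3 * X * Ek 0 ^ 2 * w + (Ek 0 ^ 2 * w) ^ 2 - 3 * C X ^ 2), ?_⟩
    simp only [Ek_zero]; ring
  induction j with
  | zero => exact ⟨0, by simp, by simp, by simp [P]⟩
  | succ j ih =>
    obtain ⟨l, -, -, h⟩ := ih
    refine ⟨1, by simp, by simp, ?_⟩
    rw [show 2 * (j + 1) = (2 * j + 1) + 1 by ring, P_succ, one_mul]
    refine key2 _ ?_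
    rw [P_succ]
    refine key _ ?_
    have := (dvd_pow_self (Ek 0) two_ne_zero).trans h
    have h2 : P (2 * j) - C X = (P (2 * j) - (C X + l * (X - C X) * Ek 0)) + Ek 0 * (l * (X - C X)) := by ring
    rw [h2]; exact dvd_add this (dvd_mul_right _ _)

/-- For odd `k` the conic `E_0 = 0` is not a component of `F_k = 0` and `H = F_k`; for even `k` it
is a simple component and `H = F_k / E_0`. In both cases the restriction of `H` to the conic comes
from the expansions of the iterates along it. -/
lemma exists_good (k : ℕ) : ∃ (H : Polynomial (Polynomial ℤ)) (m ε : ℤ), Good H m ε ∧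
    sg ℤ H = H ∧ (Fk k = H ∨ Fk k = Ek 0 * H) := by
  have hEF : Fk k ∣ Ek (k + 1) := ⟨Ek k, by rw [Ek_succ, mul_comm]⟩
  rcases Nat.even_or_odd' k with ⟨j, rfl | rfl⟩
  · obtain ⟨l, hl0, hl1, A, hA⟩ := P_even j
    obtain ⟨l', -, hl', A', hA'⟩ := P_even (j + 1)
    obtain rfl : l' = 1 := hl' (by omega)
    -- `m = 1 + l`, which is `1` for `k = 0` and `2` for the other even values of `k`
    obtain ⟨m, hm, hmm⟩ : ∃ m : ℤ, (m : Polynomial (Polynomial ℤ)) = 1 + l ∧ (m = 1 ∨ m = 2) := by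
      rcases eq_or_ne j 0 with h | h
      · exact ⟨1, by rw [hl0 h]; simp, by simp⟩
      · exact ⟨2, by rw [hl1 h]; norm_num, by simp⟩
    have e1 : P (2 * j) = C X + l * (X - C X) * Ek 0 + Ek 0 ^ 2 * A := by rw [← hA]; ring
    have e2 : P (2 * j + 2) = C X + (X - C X) * Ek 0 + Ek 0 ^ 2 * A' := by
      rw [← hA', show 2 * (j + 1) = 2 * j + 2 by ring]; ring
    have e3 : ∃ B, P (2 * j + 1) = X + Ek 0 ^ 2 * B := by
      refine ⟨(l * (X - C X) + Ek 0 * A) ^ 2 * (3 * C X + l * (X - C X) * Ek 0 + Ek 0 ^ 2 * A), ?_⟩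
      rw [P_succ, e1]; ring
    obtain ⟨B, e3⟩ := e3
    have hE : (X - C X) * (X + 2 * C X) = Ek 0 - 1 := by rw [Ek_zero]; ring
    obtain ⟨r, hr⟩ : ∃ r, Fk (2 * j) = Ek 0 * ((m : Polynomial (Polynomial ℤ)) * ((X - C X) ^ 2 + 1) + Ek 0 * r) := by
      rw [hm, Fk, e1, e2, e3]
      generalize Ek 0 = E at *
      generalize (C X : Polynomial (Polynomial ℤ)) = a at *
      generalize (X : Polynomial (Polynomial ℤ)) = b at *
      refine ⟨(b - a) * (A' + B + A) - l - l * (1 + l) * (b - a) ^ 2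
        - l * (b - a) * E * (A' + B + A)
        + (B - A) * (b + 2 * a + (1 + l) * (b - a) * E + E ^ 2 * (A' + B + A)), ?_⟩
      linear_combination (1 - l * E) * hE
    refine ⟨_, m, 1, ⟨by omega, ?_, ?_, ?_⟩, ?_, Or.inr hr⟩
    · exact (Ek_monic 0).of_mul_monic_left (hr ▸ Fk_monic (2 * j))
    · exact ⟨_, (Dvd.intro_left _ hr.symm).trans hEF⟩
    · exact ⟨r, by push_cast; ring⟩
    · have := sg_Fk (2 * j)
      rw [hr, map_mul, sg_Ek] at this
      exact mul_left_cancel₀ (Ek_monic 0).ne_zero this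
  · refine ⟨Fk (2 * j + 1), -1, -2, ⟨by omega, Fk_monic _, ⟨_, hEF⟩, ?_⟩, sg_Fk _, Or.inl rfl⟩
    obtain ⟨l, -, -, A, hA⟩ := P_even (j + 1)
    have e1 : P (2 * j + 2) = C X + Ek 0 * (l * (X - C X) + Ek 0 * A) := by
      rw [show 2 * j + 2 = 2 * (j + 1) by ring]
      linear_combination hA
    obtain ⟨l', -, -, A', hA'⟩ := P_even j
    have e0 : P (2 * j) = C X + Ek 0 * (l' * (X - C X) + Ek 0 * A') := by
      linear_combination hA'
    have e2 : ∃ B, P (2 * j + 1) = X + Ek 0 * B := by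
      refine ⟨Ek 0 * (l' * (X - C X) + Ek 0 * A') ^ 2 * (3 * C X + Ek 0 * (l' * (X - C X) + Ek 0 * A')), ?_⟩
      rw [P_succ, e0]; ring
    have e3 : ∃ B, P (2 * j + 3) = X + Ek 0 * B := by
      refine ⟨Ek 0 * (l * (X - C X) + Ek 0 * A) ^ 2 * (3 * C X + Ek 0 * (l * (X - C X) + Ek 0 * A)), ?_⟩
      rw [P_succ, e1]; ring
    obtain ⟨B, e2⟩ := e2
    obtain ⟨B', e3⟩ := e3
    generalize l * (X - C X) + Ek 0 * A = W at *
    have hE : Ek 0 = 1 + (X - C X) * (X + 2 * C X) := Ek_zero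
    rw [Fk, show 2 * j + 1 + 1 = 2 * j + 2 by ring, show 2 * j + 1 + 2 = 2 * j + 3 by ring, e1, e2, e3]
    clear hA hA' e0 e1 e2 e3
    generalize Ek 0 = E at *
    generalize (C X : Polynomial (Polynomial ℤ)) = a at *
    generalize (X : Polynomial (Polynomial ℤ)) = b at *
    refine ⟨(W - B) * (2 * b + a + E * (B' + W + B)) + (a - b) * (B' + W + B) - 1, ?_⟩
    push_cast
    linear_combination hE

/-! ### Irreducibility over `ℤ` -/

/-- `1 + (b - a)²` is prime over `𝔽₃` because `-1` is not a square there. -/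
lemma prime_mod_three : Prime (1 + (X - C X) ^ 2 : Polynomial (Polynomial (ZMod 3))) := by
  have hm : (1 + (X - C X) ^ 2 : Polynomial (Polynomial (ZMod 3))) =
      (X - C X) ^ 2 + C 1 := by rw [C_1]; ring
  have h2 : ((X - C X) ^ 2 : Polynomial (Polynomial (ZMod 3))).natDegree = 2 := by
    rw [natDegree_pow, natDegree_X_sub_C]
  have hmon : ((X - C X) ^ 2 + C 1 : Polynomial (Polynomial (ZMod 3))).Monic := by
    refine ((monic_X_sub_C _).pow 2).add_of_left (degree_lt_degree ?_)
    rw [h2, natDegree_C]; norm_num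
  have hdeg : ((X - C X) ^ 2 + C 1 : Polynomial (Polynomial (ZMod 3))).natDegree = 2 := by
    rw [natDegree_add_C, h2]
  rw [hm, ← irreducible_iff_prime,
    hmon.irreducible_iff_roots_eq_zero_of_degree_le_three hdeg.ge (by omega)]
  refine Multiset.eq_zero_of_forall_notMem fun r hr => ?_
  have h := isRoot_of_mem_roots hr
  simp only [IsRoot.def, eval_add, eval_pow, eval_sub, eval_X, eval_C] at h
  have h' := congrArg (eval 0) h
  simp only [eval_add, eval_pow, eval_sub, eval_X, eval_one, eval_zero] at h'
  generalize eval 0 r = c at h'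
  revert c; decide

lemma three_dvd_of_map_eq_zero (f : Polynomial (Polynomial ℤ))
    (hf : f.map (mapRingHom (Int.castRingHom (ZMod 3))) = 0) : 3 ∣ f := by
  have e : (3 : Polynomial (Polynomial ℤ)) = C (C 3) := by simp only [map_ofNat]
  rw [e, C_dvd_iff_dvd_coeff]
  intro i
  rw [C_dvd_iff_dvd_coeff]
  intro j
  have := congrArg (fun g => (g.coeff i).coeff j) hf
  simp only [coeff_map, coe_mapRingHom, coeff_zero, eq_intCast] at this
  exact (ZMod.intCast_zmod_eq_zero_iff_dvd _ 3).1 this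

/-- A nonconstant monic divisor of `E_k` is divisible by `E_0` modulo `3`. -/
lemma exists_eq_of_dvd_Ek {k : ℕ} {p : Polynomial (Polynomial ℤ)} (hp : p.Monic)
    (hd : 0 < p.natDegree) (h : p ∣ Ek k) : ∃ g u, p = Ek 0 * g + 3 * u := by
  set φ := mapRingHom (Int.castRingHom (ZMod 3)) with hφ
  have h1 : p.map φ ∣ (1 + (X - C X) ^ 2) ^ 3 ^ k := by
    rw [← Ek_mod_three]; exact Polynomial.map_dvd _ h
  obtain ⟨i, -, hi⟩ := (dvd_prime_pow prime_mod_three _).1 h1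
  have hd' : (p.map φ).natDegree = p.natDegree := hp.natDegree_map φ
  have h0 : i ≠ 0 := by
    rintro rfl
    rw [pow_zero, associated_one_iff_isUnit] at hi
    have := natDegree_eq_zero_of_isUnit hi
    omega
  have h2 : (Ek 0).map φ ∣ p.map φ := by
    rw [Ek_mod_three, pow_zero, pow_one]
    exact (dvd_pow_self _ h0).trans hi.symm.dvd
  obtain ⟨g, hg⟩ := h2
  have hs : Function.Surjective φ := map_surjective _ (ZMod.ringHom_surjective _)
  obtain ⟨g', rfl⟩ := map_surjective φ hs g
  obtain ⟨u, hu⟩ := three_dvd_of_map_eq_zero (p - Ek 0 * g') (by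
    rw [Polynomial.map_sub, Polynomial.map_mul, ← hφ, hg, sub_self])
  exact ⟨g', u, by rw [← hu]; ring⟩

open scoped QuadraticAlgebra in
/-- Eisenstein's argument: two nonconstant factors of `H` both vanish modulo `3` on the conic
`E_0 = 0`, so `H` vanishes there modulo `9`, whereas `m(x² + ε)` does not. -/
lemma Good.eisenstein {H : Polynomial (Polynomial ℤ)} {m ε : ℤ} (hH : Good H m ε)
    {p q : Polynomial (Polynomial ℤ)} (hp : p.Monic) (hq : q.Monic)
    (hpd : 0 < p.natDegree) (hqd : 0 < q.natDegree) (h : H = p * q) : False := by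
  obtain ⟨k, hk⟩ := hH.dvd
  obtain ⟨g, u, hu⟩ := exists_eq_of_dvd_Ek hp hpd ((Dvd.intro _ h.symm).trans hk)
  obtain ⟨g', u', hu'⟩ := exists_eq_of_dvd_Ek hq hqd ((Dvd.intro_left _ h.symm).trans hk)
  obtain ⟨r, hr⟩ := hH.mod
  -- restrict to `a = 1`: the conic meets this line where `x² + 3x + 1 = 0`, so `x² + ε` becomes
  -- `(ε - 1) - 3x`, whose coefficient of `x` is not divisible by `9`
  let z : QuadraticAlgebra ℤ (-1) (-3) := ⟨0, 1⟩
  have hz : z ^ 2 = -1 - 3 * z := by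
    rw [pow_two]; ext <;> simp [z]
  set θ := ev (Int.castRingHom (QuadraticAlgebra ℤ (-1) (-3))) 1 (1 + z) with hθ
  have ha : θ (C X) = 1 := by simp [hθ]
  have hb : θ X = 1 + z := by simp [hθ]
  have hE : θ (Ek 0) = 0 := by
    rw [Ek_zero]
    simp only [map_add, map_sub, map_mul, map_one, map_ofNat, ha, hb]
    linear_combination hz
  have h1 : 9 * (θ u * θ u') = (m : QuadraticAlgebra ℤ (-1) (-3)) * ((-1 - 3 * z) + (ε : QuadraticAlgebra ℤ (-1) (-3))) := by
    have := congrArg θ hr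
    rw [h, hu, hu'] at this
    simp only [map_add, map_sub, map_mul, map_pow, map_intCast, map_ofNat, ha, hb, hE] at this
    rw [← hz]
    linear_combination this
  have h2 := congrArg QuadraticAlgebra.im h1
  generalize θ u * θ u' = w at h2
  simp [z] at h2
  rcases hH.par with ⟨rfl, rfl⟩ | ⟨rfl, rfl⟩ | ⟨rfl, rfl⟩ <;> omega

lemma Good.eq_of_dvd {H : Polynomial (Polynomial ℤ)} {m ε : ℤ} (hH : Good H m ε)
    {p : Polynomial (Polynomial ℤ)} (hp : p.Monic) (hpd : 0 < p.natDegree) (h : p ∣ H) : p = H := by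
  obtain ⟨q, hq⟩ := h
  have hqm : q.Monic := hp.of_mul_monic_left (hq ▸ hH.monic)
  rcases Nat.eq_zero_or_pos q.natDegree with h0 | h0
  · rw [hq, eq_one_of_monic_natDegree_zero hqm h0, mul_one]
  · exact (hH.eisenstein hp hqm hpd h0 hq).elim

/-! ### The zeros of `H` on the complex conic -/

/-- The inclusion `ℤ[a,b] → ℂ[a,b]`, bundled as a ring homomorphism. -/
noncomputable def ι : Polynomial (Polynomial ℤ) →+* Polynomial (Polynomial ℂ) :=
  mapRingHom (mapRingHom (Int.castRingHom ℂ))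

lemma toC_eq (p : Polynomial (Polynomial ℤ)) : toC p = ι p := rfl
@[simp] lemma ι_CX : ι (C X) = C X := by simp [ι]
@[simp] lemma ι_X : ι X = X := by simp [ι]

lemma sigmaC_eq (t : Polynomial (Polynomial ℂ)) : sigmaC t = sg ℂ t := by
  have : (compRingHom (-X : Polynomial (Polynomial ℂ))).comp
      (mapRingHom (Polynomial.aeval (-X : Polynomial ℂ)).toRingHom) = sg ℂ := by
    refine hom_ext (fun r => ?_) ?_ ?_ <;> simp [sg]
  rw [← this]; rfl

lemma sg_sg (t : Polynomial (Polynomial ℂ)) : sg ℂ (sg ℂ t) = t := by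
  have : (sg ℂ).comp (sg ℂ) = RingHom.id _ := by
    refine hom_ext (fun r => ?_) ?_ ?_ <;> simp [sg]
  exact congrArg (fun g => g t) this

lemma sg_ι (p : Polynomial (Polynomial ℤ)) : sg ℂ (ι p) = ι (sg ℤ p) := by
  have : (sg ℂ).comp ι = ι.comp (sg ℤ) := by
    refine hom_ext_int ?_ ?_ <;> simp [sg]
  exact congrArg (fun g => g p) this

/-- The evaluation at the point of the conic `E_0 = 0` with `b - a = ρ`, for `ρ ≠ 0`: there
`b + 2a = -ρ⁻¹`, that is, `a = -(ρ + ρ⁻¹)/3`. -/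
noncomputable def pt (ρ : ℂ) : Polynomial (Polynomial ℂ) →+* ℂ :=
  ev (RingHom.id ℂ) (-(ρ + ρ⁻¹) / 3) (ρ - (ρ + ρ⁻¹) / 3)

lemma pt_sg (ρ : ℂ) (t : Polynomial (Polynomial ℂ)) : pt ρ (sg ℂ t) = pt (-ρ) t := by
  have : (pt ρ).comp (sg ℂ) = pt (-ρ) := by
    refine hom_ext (fun r => ?_) ?_ ?_ <;> simp [sg, pt, inv_neg] <;> ring
  exact congrArg (fun g => g t) this

/-- The Taylor expansion to first order of the restriction to the conic `E_0 = 0`, at the point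
`b - a = ρ` and with parameter `b - a`. -/
noncomputable def jet (ρ : ℂ) : Polynomial (Polynomial ℂ) →+* DualNumber ℂ :=
  ev (algebraMap ℂ (DualNumber ℂ))
    (TrivSqZeroExt.inl (-(ρ + ρ⁻¹) / 3) + TrivSqZeroExt.inr ((ρ⁻¹ ^ 2 - 1) / 3))
    (TrivSqZeroExt.inl (ρ - (ρ + ρ⁻¹) / 3) + TrivSqZeroExt.inr (1 + (ρ⁻¹ ^ 2 - 1) / 3))

lemma fst_jet (ρ : ℂ) (t : Polynomial (Polynomial ℂ)) : (jet ρ t).fst = pt ρ t := by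
  have : (TrivSqZeroExt.fstHom ℂ ℂ ℂ).toRingHom.comp (jet ρ) = pt ρ := by
    refine hom_ext (fun r => ?_) ?_ ?_ <;> simp [jet, pt]
  exact congrArg (fun g => g t) this

lemma jet_Ek_zero {ρ : ℂ} (hρ : ρ ≠ 0) : jet ρ (ι (Ek 0)) = 0 := by
  rw [Ek_zero, two_mul]
  simp only [map_add, map_sub, map_mul, map_one, ι_CX, ι_X]
  simp only [jet, ev_CX, ev_X]
  ext
  · simp; field_simp; ring
  · simp; field_simp; ring

lemma Good.jet_eq {H : Polynomial (Polynomial ℤ)} {m ε : ℤ} (hH : Good H m ε) {ρ : ℂ}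
    (hρ : ρ ≠ 0) (h : ρ ^ 2 = -ε) : jet ρ (ι H) = TrivSqZeroExt.inr (2 * m * ρ) := by
  obtain ⟨r, hr⟩ := hH.mod
  have h1 := congrArg (fun t => jet ρ (ι t)) hr
  simp only [map_mul, jet_Ek_zero hρ, zero_mul, map_sub, sub_eq_zero] at h1
  rw [h1]
  simp only [map_add, map_sub, map_pow, map_intCast, ι_CX, ι_X]
  simp only [jet, ev_CX, ev_X]
  ext
  · simp [pow_two]; right; linear_combination h
  · simp [pow_two]; ring

lemma Good.pt_eq {H : Polynomial (Polynomial ℤ)} {m ε : ℤ} (hH : Good H m ε) {ρ : ℂ}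
    (hρ : ρ ≠ 0) (h : ρ ^ 2 = -ε) : pt ρ (ι H) = 0 := by
  rw [← fst_jet, hH.jet_eq hρ h]; simp

/-- `H` has a simple zero along the conic at each point with `(b - a)² = -ε`, so at most one of its
irreducible factors vanishes there. -/
lemma Good.not_double {H : Polynomial (Polynomial ℤ)} {m ε : ℤ} (hH : Good H m ε) {ρ : ℂ}
    (hρ : ρ ≠ 0) (h : ρ ^ 2 = -ε) {t u : Polynomial (Polynomial ℂ)} (htu : t * u ∣ ι H)
    (ht : pt ρ t = 0) (hu : pt ρ u = 0) : False := by
  have h0 : jet ρ (t * u) = 0 := by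
    rw [map_mul]
    rw [← fst_jet] at ht hu
    ext <;> simp [ht, hu]
  obtain ⟨w, hw⟩ := htu
  have h1 := hH.jet_eq hρ h
  rw [hw, map_mul, h0, zero_mul] at h1
  have h2 := congrArg TrivSqZeroExt.snd h1
  have hm : (m : ℂ) ≠ 0 := by
    rcases hH.par with ⟨rfl, -⟩ | ⟨rfl, -⟩ | ⟨rfl, -⟩ <;> norm_num
  simp [hm, hρ] at h2

/-! ### Complex factors of a polynomial irreducible over `ℚ` -/

/-- The inclusion `ℚ[a,b] → ℂ[a,b]`. -/
noncomputable def jC : Polynomial (Polynomial ℚ) →+* Polynomial (Polynomial ℂ) :=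
  mapRingHom (mapRingHom (algebraMap ℚ ℂ))

/-- If `q` is a complex factor of an irreducible `p₀` over `ℚ`, then every rational polynomial
divisible by `q` is divisible by `p₀`: the class of `b` in `ℂ[a,b]/(q)` has minimal polynomial
`p₀` over `ℚ[a]`. -/
lemma dvd_of_dvd_jC {p₀ : Polynomial (Polynomial ℚ)} (hm : p₀.Monic) (hi : Irreducible p₀)
    {q : Polynomial (Polynomial ℂ)} (hqm : q.Monic) (hqi : Irreducible q) (hq : q ∣ jC p₀)
    {g : Polynomial (Polynomial ℚ)} (hg : q ∣ jC g) : p₀ ∣ g := by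
  have hqd : q.natDegree ≠ 0 := fun h0 =>
    hqi.not_isUnit (by rw [eq_one_of_monic_natDegree_zero hqm h0]; exact isUnit_one)
  have : IsDomain (AdjoinRoot q) := AdjoinRoot.isDomain_of_prime hqi.prime
  let f : Polynomial ℚ →+* AdjoinRoot q :=
    (AdjoinRoot.of q).comp (mapRingHom (algebraMap ℚ ℂ))
  have hf : Function.Injective f := by
    refine Function.Injective.comp (g := AdjoinRoot.of q) ?_
      (map_injective _ (algebraMap ℚ ℂ).injective)
    rw [injective_iff_map_eq_zero]
    intro r hr
    by_contra h0
    have h1 : q ∣ C r := AdjoinRoot.mk_eq_zero.1 hr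
    have h2 := natDegree_le_of_dvd h1 (C_ne_zero.2 h0)
    rw [natDegree_C] at h2
    omega
  let : Algebra (Polynomial ℚ) (AdjoinRoot q) := f.toAlgebra
  have : FaithfulSMul (Polynomial ℚ) (AdjoinRoot q) :=
    (faithfulSMul_iff_algebraMap_injective _ _).2 hf
  have : Module.IsTorsionFree (Polynomial ℚ) (AdjoinRoot q) := inferInstance
  have key : ∀ g : Polynomial (Polynomial ℚ), q ∣ jC g → aeval (AdjoinRoot.root q) g = 0 := by
    intro g hg
    have : aeval (AdjoinRoot.root q) g = AdjoinRoot.mk q (jC g) := by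
      rw [aeval_def, ← AdjoinRoot.aeval_eq, jC, coe_mapRingHom, aeval_def, eval₂_map]
      rfl
    rw [this, AdjoinRoot.mk_eq_zero]; exact hg
  have hint : IsIntegral (Polynomial ℚ) (AdjoinRoot.root q) := ⟨p₀, hm, key p₀ hq⟩
  have h1 := minpoly.isIntegrallyClosed_dvd hint (key p₀ hq)
  have h2 := minpoly.isIntegrallyClosed_dvd hint (key g hg)
  exact ((hi.dvd_iff.1 h1).resolve_left (minpoly.not_isUnit _ _)).dvd.trans h2

section
attribute [local instance] Polynomial.algebra

/-- Suppose `p₀` is irreducible over `ℚ` and vanishes at the point of the conic `E_0 = 0` with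
`b - a = ρ`, where `ρ² ∈ ℤ`. Then each complex factor `q` of `p₀`, irreducible and monic in `b`,
vanishes there or at the point with `b - a = -ρ`.
Indeed `q` is defined over the field `K` of algebraic numbers and lies above `(p₀)`, so by going up
in the integral extension `ℚ[a,b] ⊂ K[a,b]` some prime `Q ∋ q` lies above the maximal ideal of
`ℚ[a,b]` given by the point `ρ`; that prime is the ideal of the point `ρ` or `-ρ`. -/
lemma pt_eq_zero_of_dvd {p₀ : Polynomial (Polynomial ℚ)} (hm : p₀.Monic) (hi : Irreducible p₀)
    {q : Polynomial (Polynomial ℂ)} (hqm : q.Monic) (hqi : Irreducible q) (hq : q ∣ jC p₀)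
    {ρ : ℂ} {n : ℤ} (hρ : ρ ≠ 0) (h : ρ ^ 2 = n) (hp : pt ρ (jC p₀) = 0) :
    pt ρ q = 0 ∨ pt (-ρ) q = 0 := by
  let K := algebraicClosure ℚ ℂ
  let κ : Polynomial (Polynomial K) →+* Polynomial (Polynomial ℂ) :=
    mapRingHom (mapRingHom (algebraMap K ℂ))
  have hκX : κ X = X := by simp [κ]
  have hκa : κ (C X) = C X := by simp [κ]
  have hjX : jC X = X := by simp [jC]
  have hja : jC (C X) = C X := by simp [jC]
  -- the coefficients of `q` are algebraic
  obtain ⟨q', hq'⟩ : ∃ q', κ q' = q := by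
    refine (mem_lifts q).1 ((lifts_iff_coeff_lifts q).2 fun i => ?_)
    refine (mem_lifts (q.coeff i)).1 ((lifts_iff_coeff_lifts _).2 fun j => ?_)
    have h1 : IsIntegral (Polynomial ℚ) (q.coeff i) := isIntegral_coeff_of_dvd p₀ q hm hqm hq i
    have h2 : IsIntegral ℚ ((q.coeff i).coeff j) := h1.coeff j
    exact ⟨⟨_, h2⟩, rfl⟩
  obtain ⟨ρ', hρ'⟩ : ∃ ρ' : K, (ρ' : ℂ) = ρ := by
    refine ⟨⟨ρ, ?_⟩, rfl⟩
    have : IsIntegral ℚ (ρ ^ 2) := by rw [h]; exact isIntegral_intCast _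
    exact this.of_pow (by norm_num)
  have hρK : ρ' ^ 2 = n := by
    apply (algebraMap K ℂ).injective
    rw [map_pow, map_intCast, ← h, ← hρ']; rfl
  have : Algebra.IsIntegral (Polynomial (Polynomial ℚ)) (Polynomial (Polynomial K)) :=
    ⟨fun f => isIntegral_iff_isIntegral_coeff.2 fun i =>
      isIntegral_iff_isIntegral_coeff.2 fun j =>
        (isIntegral_algebraMap_iff (algebraMap K ℂ).injective).1 ((f.coeff i).coeff j).2⟩
  have hcomp : ∀ g, κ (algebraMap (Polynomial (Polynomial ℚ)) (Polynomial (Polynomial K)) g) = jC g := by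
    intro g
    have : κ.comp (algebraMap (Polynomial (Polynomial ℚ)) (Polynomial (Polynomial K))) = jC := by
      refine hom_ext (fun r => ?_) ?_ ?_ <;> simp [κ, jC]
    exact congrArg (fun g' => g' g) this
  have := RingHom.ker_isPrime ((pt ρ).comp jC)
  obtain ⟨Q, hIQ, hQp, hQ⟩ := Ideal.exists_ideal_over_prime_of_isIntegral
    (RingHom.ker ((pt ρ).comp jC)) (Ideal.comap κ (Ideal.span {q})) (by
      intro g hg
      rw [Ideal.mem_comap, Ideal.mem_comap, hcomp, Ideal.mem_span_singleton] at hg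
      obtain ⟨w, rfl⟩ := dvd_of_dvd_jC hm hi hqm hqi hq hg
      rw [RingHom.mem_ker, RingHom.comp_apply, map_mul, map_mul, hp, zero_mul])
  have hQmem : ∀ g, pt ρ (jC g) = 0 →
      algebraMap (Polynomial (Polynomial ℚ)) (Polynomial (Polynomial K)) g ∈ Q := by
    intro g hg
    rw [← Ideal.mem_comap, hQ]; exact hg
  have hq'Q : q' ∈ Q := hIQ (by
    rw [Ideal.mem_comap, hq']; exact Ideal.mem_span_singleton_self q)
  have e1 : (X - C X : Polynomial (Polynomial K)) ^ 2 - n ∈ Q := by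
    have := hQmem ((X - C X) ^ 2 - (n : Polynomial (Polynomial ℚ))) (by
      rw [map_sub, map_sub, map_pow, map_pow, map_sub, map_sub, map_intCast, map_intCast, hjX, hja,
        pt, ev_X, ev_CX, ← h]
      ring)
    simpa using this
  have e2 : (1 + (X - C X) * (X + 2 * C X) : Polynomial (Polynomial K)) ∈ Q := by
    have := hQmem (1 + (X - C X) * (X + 2 * C X)) (by
      simp only [map_add, map_sub, map_mul, map_one, map_ofNat, hjX, hja, pt, ev_X, ev_CX]
      field_simp; ring)
    simpa using this
  -- the conic equation recovers `a` and `b` from `b - a`, so `K[a,b] → K[a,b]/Q` factors through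
  -- the evaluation at the point `s`
  have claim : ∀ s : K, s ^ 2 = n → s ≠ 0 → (X - C X - C (C s) : Polynomial (Polynomial K)) ∈ Q →
      pt (s : ℂ) q = 0 := by
    intro s hs hs0 hsQ
    let π := Ideal.Quotient.mk Q
    let c : K →+* (Polynomial (Polynomial K) ⧸ Q) := π.comp (C.comp C)
    let e : Polynomial (Polynomial K) →+* K :=
      ev (RingHom.id K) (-(s + s⁻¹) / 3) (s - (s + s⁻¹) / 3)
    have f1 : π X - π (C X) = c s := by
      have := Ideal.Quotient.eq_zero_iff_mem.2 hsQ
      rw [map_sub, map_sub, sub_eq_zero] at this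
      exact this
    have f2 : 1 + (π X - π (C X)) * (π X + 2 * π (C X)) = 0 := by
      have := Ideal.Quotient.eq_zero_iff_mem.2 e2
      simpa only [map_add, map_sub, map_mul, map_one, map_ofNat] using this
    have fa : π (C X) = c (-(s + s⁻¹) / 3) := by
      have g1 : c (3⁻¹ * s⁻¹) * (3 * c s) = 1 := by
        rw [show (3 : Polynomial (Polynomial K) ⧸ Q) = c 3 by rw [map_ofNat], ← map_mul, ← map_mul]
        rw [show 3⁻¹ * s⁻¹ * (3 * s) = 1 by field_simp, map_one]
      have g2 : c (-(s + s⁻¹) / 3) = c (3⁻¹ * s⁻¹) * (-1 - c s ^ 2) := by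
        rw [← map_pow, ← map_one c, ← map_neg, ← map_sub, ← map_mul]
        congr 1; field_simp; ring
      have f3 : 3 * c s * π (C X) = -1 - c s ^ 2 := by
        rw [← f1]; linear_combination f2
      rw [g2, ← f3]
      linear_combination (-π (C X)) * g1
    have hom : π = c.comp e := by
      refine hom_ext (fun r => ?_) ?_ ?_
      · simp [e, c]
      · simpa [e] using fa
      · have : π X = c s + π (C X) := by rw [← f1]; ring
        rw [this, fa, ← map_add]
        change _ = c (e X)
        rw [show e X = s - (s + s⁻¹) / 3 by simp only [e, ev_X]]
        congr 1; ring
    have hz : c (e q') = 0 := by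
      have : π q' = 0 := Ideal.Quotient.eq_zero_iff_mem.2 hq'Q
      rw [hom] at this; exact this
    have : Nontrivial (Polynomial (Polynomial K) ⧸ Q) := Ideal.Quotient.nontrivial_iff.2 hQp.ne_top
    have hz' : e q' = 0 := c.injective (by rw [hz, map_zero])
    have hcompat : (pt (s : ℂ)).comp κ = (algebraMap K ℂ).comp e := by
      refine hom_ext (fun r => ?_) ?_ ?_
      · simp [pt, κ, e]
      · simp [pt, κ, e]; rfl
      · simp [pt, κ, e]; rfl
    rw [← hq']
    have := congrArg (fun g => g q') hcompat
    simp only [RingHom.comp_apply, hz', map_zero] at this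
    exact this
  have hρ0 : ρ' ≠ 0 := by
    rintro rfl; exact hρ (by rw [← hρ']; rfl)
  have e3 : (X - C X - C (C ρ')) * (X - C X - C (C (-ρ')) : Polynomial (Polynomial K)) ∈ Q := by
    convert e1 using 1
    have : (C (C (ρ' ^ 2)) : Polynomial (Polynomial K)) = n := by
      rw [hρK]; simp
    rw [← this]; simp only [map_neg, map_pow]; ring
  rcases hQp.mem_or_mem e3 with h1 | h1
  · left
    rw [← hρ']; exact claim ρ' hρK hρ0 h1
  · right
    have := claim (-ρ') (by rw [neg_sq, hρK]) (neg_ne_zero.2 hρ0) h1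
    rw [← hρ']
    simpa using this

end

/-! ### The complex factorization -/

lemma irreducible_sg {t : Polynomial (Polynomial ℂ)} (ht : Irreducible t) :
    Irreducible (sg ℂ t) := by
  have hu : ∀ x, IsUnit (sg ℂ x) → IsUnit x := fun x hx => by
    have := hx.map (sg ℂ)
    rwa [sg_sg] at this
  refine ⟨fun h => ht.not_isUnit (hu t h), fun x y hxy => ?_⟩
  have h : t = sg ℂ x * sg ℂ y := by rw [← map_mul, ← hxy, sg_sg]
  exact (ht.isUnit_or_isUnit h).imp (hu x) (hu y)

/-- Each complex irreducible factor of `H` vanishes at `ρ` or at `-ρ`; `q` is scaled to be monic in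
`b` before `pt_eq_zero_of_dvd` applies. -/
lemma Good.pt_factor {H : Polynomial (Polynomial ℤ)} {m ε : ℤ} (hH : Good H m ε)
    (hirr : Irreducible (H.map (mapRingHom (Int.castRingHom ℚ)))) {ρ : ℂ}
    (hρ : ρ ≠ 0) (h : ρ ^ 2 = -ε) {q : Polynomial (Polynomial ℂ)} (hqi : Irreducible q)
    (hq : q ∣ ι H) : pt ρ q = 0 ∨ pt (-ρ) q = 0 := by
  have hj : ι H = jC (H.map (mapRingHom (Int.castRingHom ℚ))) := by
    have : ι = jC.comp (mapRingHom (mapRingHom (Int.castRingHom ℚ))) := by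
      refine hom_ext_int ?_ ?_ <;> simp [ι, jC]
    rw [this]; rfl
  obtain ⟨r, hr⟩ := hq
  have hmon : (ι H).Monic := hH.monic.map _
  have hlc : r.leadingCoeff * q.leadingCoeff = 1 := by
    rw [mul_comm, ← leadingCoeff_mul, ← hr]; exact hmon
  have hu : IsUnit (C r.leadingCoeff) := (IsUnit.of_mul_eq_one _ hlc).map C
  have hass : Associated q (C r.leadingCoeff * q) := (associated_unit_mul_left q _ hu).symm
  have := pt_eq_zero_of_dvd (hH.monic.map _) hirr (monic_C_mul_of_mul_leadingCoeff_eq_one hlc)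
    (hass.irreducible hqi) (hass.symm.dvd.trans (hj ▸ Dvd.intro _ hr.symm)) (n := -ε) hρ
    (by rw [h]; push_cast; rfl) (by rw [← hj]; exact hH.pt_eq hρ h)
  have hne : ∀ s, pt s (C r.leadingCoeff) ≠ 0 := fun s => (hu.map (pt s)).ne_zero
  simpa [hne] using this

/-- The factors of `H` inject into the two points `±ρ`, which the involution exchanges. -/
lemma Good.main {H : Polynomial (Polynomial ℤ)} {m ε : ℤ} (hH : Good H m ε)
    (hsg : sg ℤ H = H) (hirr : Irreducible (H.map (mapRingHom (Int.castRingHom ℚ)))) :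
    Irreducible (ι H) ∨ ∃ (t : Polynomial (Polynomial ℂ)) (c : ℂ), Irreducible t ∧ c ≠ 0 ∧
      ι H = C (C c) * t * sg ℂ t ∧ ¬ Associated t (sg ℂ t) := by
  obtain ⟨ρ, hρ2⟩ := IsAlgClosed.exists_pow_nat_eq (-ε : ℂ) (n := 2) (by norm_num)
  have hρ : ρ ≠ 0 := by
    rintro rfl
    rcases hH.par with ⟨-, rfl⟩ | ⟨-, rfl⟩ | ⟨-, rfl⟩ <;> norm_num at hρ2
  have hmon : (ι H).Monic := hH.monic.map _
  have hnu : ¬ IsUnit (ι H) := fun hu => by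
    have := (hu.map (pt ρ)).ne_zero
    exact this (hH.pt_eq hρ hρ2)
  obtain ⟨t, hti, htd⟩ := WfDvdMonoid.exists_irreducible_factor hnu hmon.ne_zero
  obtain ⟨s, hs, hs2, hts⟩ : ∃ s : ℂ, s ≠ 0 ∧ s ^ 2 = -ε ∧ pt s t = 0 := by
    rcases hH.pt_factor hirr hρ hρ2 hti htd with h | h
    · exact ⟨ρ, hρ, hρ2, h⟩
    · exact ⟨-ρ, neg_ne_zero.2 hρ, by rw [neg_sq, hρ2], h⟩
  have hs' : -s ≠ 0 := neg_ne_zero.2 hs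
  have hs2' : (-s) ^ 2 = -ε := by rw [neg_sq, hs2]
  obtain ⟨r, hr⟩ := htd
  by_cases hru : IsUnit r
  · left
    rw [hr]
    exact (associated_mul_unit_left t r hru).symm.irreducible hti
  right
  have hr0 : r ≠ 0 := by rintro rfl; exact hmon.ne_zero (by rw [hr, mul_zero])
  obtain ⟨q, hqi, w, rfl⟩ := WfDvdMonoid.exists_irreducible_factor hru hr0
  have hq : pt (-s) q = 0 :=
    (hH.pt_factor hirr hs hs2 hqi ⟨t * w, by rw [hr]; ring⟩).resolve_left fun h =>
      hH.not_double hs hs2 ⟨w, by rw [hr]; ring⟩ hts h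
  have hw : IsUnit w := by
    by_contra hwu
    obtain ⟨q₂, hq₂i, v, rfl⟩ :=
      WfDvdMonoid.exists_irreducible_factor hwu (right_ne_zero_of_mul hr0)
    rcases hH.pt_factor hirr hs hs2 hq₂i ⟨t * q * v, by rw [hr]; ring⟩ with h | h
    · exact hH.not_double hs hs2 ⟨q * v, by rw [hr]; ring⟩ hts h
    · exact hH.not_double hs' hs2' ⟨t * v, by rw [hr]; ring⟩ hq h
  have hsgi : Irreducible (sg ℂ t) := irreducible_sg hti
  have hnt : ¬ sg ℂ t ∣ t := by
    rintro ⟨v, hv⟩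
    have : pt (-s) t = 0 := by
      rw [hv, map_mul, pt_sg, neg_neg, hts, zero_mul]
    exact hH.not_double hs' hs2' ⟨w, by rw [hr]; ring⟩ this hq
  have hsd : sg ℂ t ∣ t * (q * w) := by
    have h : sg ℂ (ι H) = ι H := by rw [sg_ι, hsg]
    rw [← hr, ← h, hr, map_mul]
    exact dvd_mul_right _ _
  have hsq : sg ℂ t ∣ q :=
    (hw.dvd_mul_right).1 ((hsgi.prime.dvd_or_dvd hsd).resolve_left hnt)
  obtain ⟨u, hu⟩ := hsgi.associated_of_dvd hqi hsq
  obtain ⟨c₀, hc₀, hc₀'⟩ := Polynomial.isUnit_iff.1 (u.isUnit.mul hw)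
  obtain ⟨c, hc, rfl⟩ := Polynomial.isUnit_iff.1 hc₀
  refine ⟨t, c, hti, hc.ne_zero, ?_, fun h => hnt h.symm.dvd⟩
  rw [hc₀', hr, ← hu]; ring

lemma Ek_zero_dvd (k : ℕ) : Ek 0 ∣ Ek k := by
  induction k with
  | zero => exact dvd_rfl
  | succ k ih => rw [Ek_succ]; exact ih.mul_right _

/-- Irreducibility of the curve `Σ_{k,2}` in `M₃`: over `ℂ`, the polynomial `h_{k,2}`
either stays irreducible, or splits into two non-associate irreducible factors
interchanged by `(a,b) ↦ (-a,-b)`. -/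
theorem stmt17 (k : ℕ) (hk : 1 ≤ k) (p : Polynomial (Polynomial ℤ))
    (hmon : p.Monic)
    (hirr : Irreducible (p.map (Polynomial.mapRingHom (Int.castRingHom ℚ))))
    (hdvd : p ∣ fkn k 2)
    (hndvd : ¬ p ∣ fkn k 1 * fkn (k - 1) 2) :
    Irreducible (toC p) ∨
    ∃ (t : Polynomial (Polynomial ℂ)) (c : ℂ), Irreducible t ∧ c ≠ 0 ∧
      toC p = C (Polynomial.C c) * t * sigmaC t ∧ ¬ Associated t (sigmaC t) := by
  obtain ⟨k, rfl⟩ := Nat.exists_eq_add_of_le' hk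
  rw [Nat.add_sub_cancel, fkn_two k] at hndvd
  rw [fkn_two, Ek_succ] at hdvd
  have hinj : Function.Injective (mapRingHom (Int.castRingHom ℚ)) :=
    map_injective _ (Int.castRingHom ℚ).injective_int
  have hprime : ∀ f g, p ∣ f * g → p ∣ f ∨ p ∣ g := by
    intro f g h
    have h' := Polynomial.map_dvd (mapRingHom (Int.castRingHom ℚ)) h
    rw [Polynomial.map_mul] at h'
    simpa only [map_dvd_map _ hinj hmon] using hirr.prime.dvd_or_dvd h'
  have hE : ¬ p ∣ Ek k := fun h => hndvd ((h.mul_left _).mul_left _)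
  have hF : p ∣ Fk k :=
    (hprime _ _ ((hprime _ _ hdvd).resolve_left fun h => hndvd (h.mul_right _))).resolve_left hE
  obtain ⟨H, m, ε, hH, hsg, hFH⟩ := exists_good k
  have hpH : p ∣ H := by
    rcases hFH with h | h
    · exact h ▸ hF
    · exact (hprime _ _ (h ▸ hF)).resolve_left fun h' => hE (h'.trans (Ek_zero_dvd k))
  have hpd : 0 < p.natDegree := by
    refine Nat.pos_of_ne_zero fun h0 => hirr.not_isUnit ?_
    rw [eq_one_of_monic_natDegree_zero hmon h0, Polynomial.map_one]
    exact isUnit_one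
  obtain rfl := hH.eq_of_dvd hmon hpd hpH
  simp only [toC_eq, sigmaC_eq]
  exact hH.main hsg hirr
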